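/- For φ ∈ ℝ and nonzero real x, y, let A_φ(x,y) = [[1, (e^{iφ}−1)/(x·y), 0], [0, 1, y], [x, 0, 1]] ∈ ℂ^{3×3}, and let P(φ) = sup over nonzero real x, y of σ_max(A_φ(x,y))^{−6}, where σ_max denotes the largest singular value. Then P(π/2) = P(π); i.e., the optimal success probability of the generalised Toffoli gate at phase π/2 equals that at phase π. -/

import Mathlib

open Complex Matrix

/-- The largest singular value of a square complex matrix, i.e. its `ℓ² → ℓ²` operator norm. -/
noncomputable def sigmaMax3 (A : Matrix (Fin 3) (Fin 3) ℂ) : ℝ :=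
  ‖Matrix.toEuclideanCLM (𝕜 := ℂ) (n := Fin 3) A‖

/-- The generalised Toffoli core matrix for phase `φ` and nonzero real parameters `x`, `y`. -/
noncomputable def toffoliCore (φ x y : ℝ) : Matrix (Fin 3) (Fin 3) ℂ :=
  !![1, (Complex.exp (φ * Complex.I) - 1) / ((x : ℂ) * (y : ℂ)), 0;
     0, 1, (y : ℂ);
     (x : ℂ), 0, 1]

/-- The optimal success probability of the generalised Toffoli gate of phase `φ`
within the class of globally rescaled unitary extensions of the core. -/
noncomputable def toffoliP (φ : ℝ) : ℝ :=
  sSup {r : ℝ | ∃ x y : ℝ, x ≠ 0 ∧ y ≠ 0 ∧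
    r = (sigmaMax3 (toffoliCore φ x y)) ^ (-6 : ℤ)}

/-- The squared Euclidean norm of the image of a vector under the core matrix. -/
lemma norm_sq_toffoliCore_apply (φ x y : ℝ) (v : EuclideanSpace ℂ (Fin 3)) :
    ‖Matrix.toEuclideanCLM (𝕜 := ℂ) (n := Fin 3) (toffoliCore φ x y) v‖ ^ 2 =
      ‖v 0 + (Complex.exp (φ * Complex.I) - 1) / ((x : ℂ) * (y : ℂ)) * v 1‖ ^ 2 +
        ‖v 1 + y * v 2‖ ^ 2 + ‖x * v 0 + v 2‖ ^ 2 := by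
  rw [EuclideanSpace.norm_sq_eq]
  simp [Fin.sum_univ_three, toffoliCore, Matrix.ofLp_toEuclideanCLM, Matrix.mulVec, dotProduct]

lemma norm_one_add_real_mul_sq {w : ℂ} (hw : ‖w‖ = 1) (t : ℝ) :
    ‖1 + t * w‖ ^ 2 = 1 + 2 * t * w.re + t ^ 2 := by
  have h : w.re * w.re + w.im * w.im = 1 := by
    rw [← Complex.normSq_apply, Complex.normSq_eq_norm_sq, hw, one_pow]
  rw [← Complex.normSq_eq_norm_sq, Complex.normSq_apply]
  simp
  linear_combination t ^ 2 * h

/-- The arithmetic-geometric mean inequality for three numbers, in terms of the geometric mean. -/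
lemma three_mul_le_add_of_mul_eq_pow {a b c r : ℝ} (ha : 0 ≤ a) (hb : 0 ≤ b) (hc : 0 ≤ c)
    (h : a * b * c = r ^ 3) : 3 * r ≤ a + b + c := by
  refine le_of_pow_le_pow_left₀ (n := 3) (by norm_num) (by positivity) ?_
  have h₁ : (3 * r) ^ 3 = 27 * (a * b * c) := by rw [h]; ring
  rw [h₁]
  nlinarith [mul_nonneg ha (sq_nonneg (b - c)), mul_nonneg hb (sq_nonneg (a - c)),
    mul_nonneg hc (sq_nonneg (a - b)), mul_nonneg ha (sq_nonneg (a - b)),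
    mul_nonneg ha (sq_nonneg (a - c)), mul_nonneg hb (sq_nonneg (b - c)),
    mul_nonneg hb (sq_nonneg (a - b)), mul_nonneg hc (sq_nonneg (a - c)),
    mul_nonneg hc (sq_nonneg (b - c))]

/-- The norm bound for the circulant matrix `1 + r w C`, where `C` is the cyclic shift and the
argument of `w` lies in `[-π/3, π/3]`. -/
lemma circulant_norm_sq_le {r : ℝ} (hr : 0 ≤ r) {w : ℂ} (hw : ‖w‖ = 1) (hre : 1 / 2 ≤ w.re)
    (a b c : ℂ) :
    ‖a + r * w * b‖ ^ 2 + ‖b + r * w * c‖ ^ 2 + ‖c + r * w * a‖ ^ 2 ≤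
      (1 + 2 * r * w.re + r ^ 2) * (‖a‖ ^ 2 + ‖b‖ ^ 2 + ‖c‖ ^ 2) := by
  have h : w.re * w.re + w.im * w.im = 1 := by
    rw [← Complex.normSq_apply, Complex.normSq_eq_norm_sq, hw, one_pow]
  obtain ⟨p, q⟩ := w
  obtain ⟨a₁, a₂⟩ := a
  obtain ⟨b₁, b₂⟩ := b
  obtain ⟨c₁, c₂⟩ := c
  simp only [← Complex.normSq_eq_norm_sq, Complex.normSq_apply] at *
  simp only [Complex.add_re, Complex.add_im, Complex.mul_re, Complex.mul_im, Complex.ofReal_re,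
    Complex.ofReal_im, zero_mul, sub_zero, add_zero]
  set s := √3
  have hs : s ^ 2 = 3 := Real.sq_sqrt (by norm_num)
  have hs₀ : 0 < s := Real.sqrt_pos.2 (by norm_num)
  have hq : |q| ≤ s * p := by
    apply abs_le_of_sq_le_sq _ (by positivity)
    nlinarith
  obtain ⟨hq₁, hq₂⟩ := abs_le.1 hq
  set E := a₁ ^ 2 + a₂ ^ 2 + b₁ ^ 2 + b₂ ^ 2 + c₁ ^ 2 + c₂ ^ 2 -
    (a₁ * b₁ + a₂ * b₂ + b₁ * c₁ + b₂ * c₂ + c₁ * a₁ + c₂ * a₂) with hE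
  set D := a₁ * b₂ - a₂ * b₁ + (b₁ * c₂ - b₂ * c₁) + (c₁ * a₂ - c₂ * a₁) with hD
  have h₁ : 0 ≤ E + s * D := by
    have : E + s * D = (a₁ - b₁ / 2 - c₁ / 2 + s / 2 * (b₂ - c₂)) ^ 2 +
        (a₂ - b₂ / 2 - c₂ / 2 - s / 2 * (b₁ - c₁)) ^ 2 := by
      rw [hE, hD]
      linear_combination (-((b₂ - c₂) ^ 2 + (b₁ - c₁) ^ 2) / 4) * hs
    rw [this]; positivity
  have h₂ : 0 ≤ E - s * D := by
    have : E - s * D = (a₁ - b₁ / 2 - c₁ / 2 - s / 2 * (b₂ - c₂)) ^ 2 +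
        (a₂ - b₂ / 2 - c₂ / 2 + s / 2 * (b₁ - c₁)) ^ 2 := by
      rw [hE, hD]
      linear_combination (-((b₂ - c₂) ^ 2 + (b₁ - c₁) ^ 2) / 4) * hs
    rw [this]; positivity
  have h₃ : 0 ≤ p * E + q * D := by
    have h₄ := mul_nonneg (by linarith : 0 ≤ s * p + q) h₁
    have h₅ := mul_nonneg (by linarith : 0 ≤ s * p - q) h₂
    have h₆ : 0 ≤ s * (p * E + q * D) := by linarith
    exact nonneg_of_mul_nonneg_right h₆ hs₀
  have h₇ := mul_nonneg hr h₃
  rw [hE, hD] at h₇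
  have h₈ : ∀ k : ℝ, r ^ 2 * k * (p * p + q * q) = r ^ 2 * k := fun k => by rw [h, mul_one]
  linarith [h₈ (a₁ ^ 2 + a₂ ^ 2 + b₁ ^ 2 + b₂ ^ 2 + c₁ ^ 2 + c₂ ^ 2)]

section

variable {φ r : ℝ} {w : ℂ}

lemma sigmaMax3_sq_ge (hr : 0 < r) (hw : ‖w‖ = 1) (hre : 0 ≤ w.re)
    (hφ : Complex.exp (φ * Complex.I) - 1 = (r * w) ^ 3) {x y : ℝ} (hx : x ≠ 0) (hy : y ≠ 0) :
    1 + 2 * r * w.re + r ^ 2 ≤ sigmaMax3 (toffoliCore φ x y) ^ 2 := by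
  have hw₀ : w ≠ 0 := by rintro rfl; simp at hw
  have hX : 0 < |x| := abs_pos.2 hx
  have hY : 0 < |y| := abs_pos.2 hy
  have hx' : (x : ℂ) ≠ 0 := by exact_mod_cast hx
  have hy' : (y : ℂ) ≠ 0 := by exact_mod_cast hy
  have hX' : ((|x| : ℝ) : ℂ) ≠ 0 := by exact_mod_cast hX.ne'
  have hY' : ((|y| : ℝ) : ℂ) ≠ 0 := by exact_mod_cast hY.ne'
  set v₂ : ℂ := x / (|x| : ℝ) / w with hv₂
  set v₁ : ℂ := y / (|y| : ℝ) * v₂ / w with hv₁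
  have hn₂ : ‖v₂‖ = 1 := by simp [hv₂, hw, hX.ne']
  have hn₁ : ‖v₁‖ = 1 := by simp [hv₁, hw, hn₂, hY.ne']
  set Z : ℝ := r ^ 3 / (|x| * |y|) with hZ
  have hZ₀ : 0 < Z := by positivity
  have e₀ : 1 + (r * w) ^ 3 / ((x : ℂ) * y) * v₁ = 1 + Z * w := by
    rw [hv₁, hv₂, hZ]; push_cast; field_simp
  have e₁ : v₁ + y * v₂ = v₁ * (1 + (|y| : ℝ) * w) := by
    rw [hv₁]; field_simp
  have e₂ : x * 1 + v₂ = v₂ * (1 + (|x| : ℝ) * w) := by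
    rw [hv₂]; field_simp; ring
  have key := norm_sq_toffoliCore_apply φ x y !₂[1, v₁, v₂]
  have hv : ‖(!₂[1, v₁, v₂] : EuclideanSpace ℂ (Fin 3))‖ ^ 2 = 3 := by
    rw [EuclideanSpace.norm_sq_eq]
    simp [Fin.sum_univ_three, hn₁, hn₂]
    norm_num
  have hle := ContinuousLinearMap.le_opNorm
    (Matrix.toEuclideanCLM (𝕜 := ℂ) (n := Fin 3) (toffoliCore φ x y)) !₂[1, v₁, v₂]
  have hle₂ := pow_le_pow_left₀ (norm_nonneg _) hle 2
  rw [mul_pow, hv, key, hφ] at hle₂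
  simp only [Matrix.cons_val] at hle₂
  rw [e₀, e₁, e₂, norm_mul, norm_mul, hn₁, hn₂, one_mul, one_mul, norm_one_add_real_mul_sq hw,
    norm_one_add_real_mul_sq hw, norm_one_add_real_mul_sq hw] at hle₂
  have ham : 3 * r ≤ Z + |y| + |x| :=
    three_mul_le_add_of_mul_eq_pow hZ₀.le hY.le hX.le (by rw [hZ]; field_simp)
  change _ ≤ ‖_‖ ^ 2
  nlinarith [mul_le_mul_of_nonneg_right ham hre, sq_nonneg (Z - |y|), sq_nonneg (Z - |x|),
    sq_nonneg (|y| - |x|), mul_self_le_mul_self (by positivity) ham]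

lemma sigmaMax3_sq_le (hr : 0 < r) (hw : ‖w‖ = 1) (hre : 1 / 2 ≤ w.re)
    (hφ : Complex.exp (φ * Complex.I) - 1 = (r * w) ^ 3) :
    sigmaMax3 (toffoliCore φ r r) ^ 2 ≤ 1 + 2 * r * w.re + r ^ 2 := by
  have hL : 0 ≤ 1 + 2 * r * w.re + r ^ 2 := by positivity
  have hr' : (r : ℂ) ≠ 0 := by exact_mod_cast hr.ne'
  rw [sigmaMax3, ← Real.le_sqrt (norm_nonneg _) hL]
  refine ContinuousLinearMap.opNorm_le_bound _ (Real.sqrt_nonneg _) fun v => ?_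
  refine le_of_pow_le_pow_left₀ (n := 2) two_ne_zero (by positivity) ?_
  rw [mul_pow, Real.sq_sqrt hL, norm_sq_toffoliCore_apply, hφ, EuclideanSpace.norm_sq_eq,
    Fin.sum_univ_three]
  have e₀ : v 0 + (r * w) ^ 3 / ((r : ℂ) * r) * v 1 = v 0 + r * w * (w ^ 2 * v 1) := by
    field_simp
  have e₁ : ‖w ^ 2 * v 1 + r * w * (w * v 2)‖ = ‖v 1 + r * v 2‖ := by
    rw [show w ^ 2 * v 1 + r * w * (w * v 2) = w ^ 2 * (v 1 + r * v 2) by ring, norm_mul,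
      norm_pow, hw, one_pow, one_mul]
  have e₂ : ‖w * v 2 + r * w * v 0‖ = ‖r * v 0 + v 2‖ := by
    rw [show w * v 2 + r * w * v 0 = w * (r * v 0 + v 2) by ring, norm_mul, hw, one_mul]
  have key := circulant_norm_sq_le hr.le hw hre (v 0) (w ^ 2 * v 1) (w * v 2)
  rw [e₁, e₂, ← e₀, norm_mul, norm_mul, norm_pow, hw, one_pow, one_mul, one_mul] at key
  exact key

/-- If `e^{iφ} - 1 = (r w)³` with `r > 0` and `w` a phase of argument in `[-π/3, π/3]`, then the
optimum is attained at `x = y = r`, where the core is unitarily equivalent to a circulant. -/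
lemma toffoliP_eq (hr : 0 < r) (hw : ‖w‖ = 1) (hre : 1 / 2 ≤ w.re)
    (hφ : Complex.exp (φ * Complex.I) - 1 = (r * w) ^ 3) :
    toffoliP φ = ((1 + 2 * r * w.re + r ^ 2) ^ 3)⁻¹ := by
  have hpow : ∀ t : ℝ, t ^ (-6 : ℤ) = ((t ^ 2) ^ 3)⁻¹ := fun t => by
    rw [← pow_mul, _root_.zpow_neg]; norm_cast
  have hre₀ : 0 ≤ w.re := by linarith
  refine IsGreatest.csSup_eq ⟨⟨r, r, hr.ne', hr.ne', ?_⟩, ?_⟩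
  · rw [hpow, le_antisymm (sigmaMax3_sq_le hr hw hre hφ)
      (sigmaMax3_sq_ge hr hw hre₀ hφ hr.ne' hr.ne')]
  · rintro _ ⟨x, y, hx, hy, rfl⟩
    rw [hpow]
    have := sigmaMax3_sq_ge hr hw hre₀ hφ hx hy
    gcongr

end

theorem stmt_16 : toffoliP (Real.pi / 2) = toffoliP Real.pi := by
  obtain ⟨s, hs, hs6⟩ : ∃ s : ℝ, 0 < s ∧ s ^ 6 = 2 :=
    ⟨2 ^ (1 / 6 : ℝ), by positivity, by rw [← Real.rpow_natCast, ← Real.rpow_mul] <;> norm_num⟩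
  have hs6' : (s : ℂ) ^ 6 = 2 := by exact_mod_cast hs6
  have h3 : ((√3 : ℝ) : ℂ) ^ 2 = 3 := by exact_mod_cast Real.sq_sqrt (by norm_num : (0 : ℝ) ≤ 3)
  have hI := Complex.I_sq
  have h₁ : toffoliP (Real.pi / 2) = ((1 + 2 * s * (s ^ 3 / 2) + s ^ 2) ^ 3)⁻¹ := by
    refine toffoliP_eq (w := ⟨s ^ 3 / 2, s ^ 3 / 2⟩) hs ?_ ?_ ?_
    · rw [← sq_eq_sq₀ (norm_nonneg _) zero_le_one, ← Complex.normSq_eq_norm_sq,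
        Complex.normSq_apply]
      linear_combination hs6 / 2
    · have : 1 ≤ s ^ 3 := le_of_pow_le_pow_left₀ two_ne_zero (by positivity)
        (by rw [← pow_mul]; norm_num [hs6])
      change 1 / 2 ≤ s ^ 3 / 2
      linarith
    · push_cast
      rw [Complex.exp_pi_div_two_mul_I, Complex.mk_eq_add_mul_I]
      push_cast
      linear_combination (-(s : ℂ) ^ 12 / 8 * (3 + I)) * hI +
        (1 - I) / 4 * ((s : ℂ) ^ 6 + 2) * hs6'
  have h₂ : toffoliP Real.pi = ((1 + 2 * s ^ 2 * (1 / 2) + (s ^ 2) ^ 2) ^ 3)⁻¹ := by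
    refine toffoliP_eq (w := ⟨1 / 2, √3 / 2⟩) (by positivity) ?_ le_rfl ?_
    · rw [← sq_eq_sq₀ (norm_nonneg _) zero_le_one, ← Complex.normSq_eq_norm_sq,
        Complex.normSq_apply]
      linear_combination Real.sq_sqrt (by norm_num : (0 : ℝ) ≤ 3) / 4
    · have hw : ((⟨1 / 2, √3 / 2⟩ : ℂ)) ^ 3 = -1 := by
        rw [Complex.mk_eq_add_mul_I]
        push_cast
        linear_combination (3 / 8 * ((√3 : ℝ) : ℂ) ^ 2 + ((√3 : ℝ) : ℂ) ^ 3 / 8 * I) * hI +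
          (-3 / 8 - ((√3 : ℝ) : ℂ) / 8 * I) * h3
      rw [Complex.exp_pi_mul_I, mul_pow, hw]
      push_cast
      linear_combination hs6'
  rw [h₁, h₂]
  ring
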